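/- arXiv:cs/0502068 — 2 statements merged into one kernel-verified Lean document; each statement's English description precedes it below -/
import Mathlib

section
/- Over all 3×3 Unit Rush Hour configurations with exactly one empty cell, any choice of exit row r containing at least one horizontal car (with target the leftmost horizontal car on row r), that are solvable, the maximum of the minimal number of legal moves needed to reach a solved configuration is exactly 12. -/
/-- A cell of an `m × n` grid, indexed (row, column), column 0 leftmost. -/
abbrev Cell (m n : ℕ) := Fin m × Fin n

/-- `u` and `v` are horizontally adjacent. -/
def hAdj {m n : ℕ} (u v : Cell m n) : Prop :=
  u.1 = v.1 ∧ (u.2.val + 1 = v.2.val ∨ v.2.val + 1 = u.2.val)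

/-- `u` and `v` are vertically adjacent. -/
def vAdj {m n : ℕ} (u v : Cell m n) : Prop :=
  u.2 = v.2 ∧ (u.1.val + 1 = v.1.val ∨ v.1.val + 1 = u.1.val)

/-- A Unit Rush Hour configuration on an `m × n` grid with `k` (labeled) cars:
each car `i` has an orientation `ori i` (`true` = horizontal, `false` =
vertical) and a position `pos i`; distinct cars occupy distinct cells.
Cells outside the range of `pos` are empty. -/
structure RHConfig (m n k : ℕ) where
  ori : Fin k → Bool
  pos : Fin k → Cell m n
  inj : Function.Injective pos

/-- A legal move: one car `i` slides one cell into an adjacent empty cell —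
horizontally if it is a horizontal car, vertically if it is a vertical car —
while all other cars (and all orientations) stay put. -/
def RHMove {m n k : ℕ} (c c' : RHConfig m n k) : Prop :=
  c'.ori = c.ori ∧
  ∃ i : Fin k,
    (∀ j, j ≠ i → c'.pos j = c.pos j) ∧
    (∀ j, c.pos j ≠ c'.pos i) ∧
    ((c.ori i = true ∧ hAdj (c.pos i) (c'.pos i)) ∨
     (c.ori i = false ∧ vAdj (c.pos i) (c'.pos i)))

/-!
Row `r` can only become solved by a horizontal car sliding from `(r, 1)` to `(r, 0)`. Read
backwards, a shortest solution therefore starts from one of the few boards with the hole at `(r, 0)`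
and a horizontal car at `(r, 1)`; the hole then leaves `(r, 0)` away from that car, never makes a
U-turn, and never produces a solved board. On the 3×3 grid an exhaustive search shows that a hole
walk with these properties has fewer than `12` moves, so a shortest solution has at most `12`.
Conversely, from an explicit configuration none of the U-turn-free walks with fewer than `12` moves
ends in a solved board, while one with `12` moves does.
-/

section ShortestPaths

variable {α β : Type*} {R : α → α → Prop} {G : α → Prop}

/-- Some `R`-path with exactly `N` steps leads from `a` into `G`. -/
def ReachesIn (R : α → α → Prop) (G : α → Prop) (N : ℕ) (a : α) : Prop :=
  ∃ f : ℕ → α, f 0 = a ∧ (∀ i < N, R (f i) (f (i + 1))) ∧ G (f N)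

theorem reachesIn_zero {a : α} : ReachesIn R G 0 a ↔ G a :=
  ⟨fun ⟨_, h0, _, hG⟩ => h0 ▸ hG, fun hG => ⟨fun _ => a, rfl, by simp, hG⟩⟩

theorem reachesIn_succ {N : ℕ} {a : α} :
    ReachesIn R G (N + 1) a ↔ ∃ b, R a b ∧ ReachesIn R G N b := by
  constructor
  · rintro ⟨f, rfl, hf, hG⟩
    exact ⟨f 1, hf 0 N.succ_pos, fun i => f (i + 1), rfl, fun i hi => hf (i + 1) (by lia), hG⟩
  · rintro ⟨b, hab, f, rfl, hf, hG⟩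
    refine ⟨fun i => Nat.casesOn i a f, rfl, fun i hi => ?_, hG⟩
    cases i with
    | zero => exact hab
    | succ i => exact hf i (by lia)

theorem ReachesIn.of_path {f : ℕ → α} {i N : ℕ} (hf : ∀ j < i, R (f j) (f (j + 1)))
    (h : ReachesIn R G N (f i)) : ReachesIn R G (N + i) (f 0) := by
  induction i generalizing N with
  | zero => exact h
  | succ i ih =>
    have hi : ReachesIn R G (N + 1) (f i) := reachesIn_succ.2 ⟨f (i + 1), hf i (by lia), h⟩
    simpa only [add_assoc, add_comm 1] using ih (fun j hj => hf j (by lia)) hi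

theorem reachesIn_iff_of_bisimulation {S : β → β → Prop} {H : β → Prop} {Z : α → β → Prop}
    (forth : ∀ {a b a'}, Z a b → R a a' → ∃ b', S b b' ∧ Z a' b')
    (back : ∀ {a b b'}, Z a b → S b b' → ∃ a', R a a' ∧ Z a' b')
    (goal : ∀ {a b}, Z a b → (G a ↔ H b)) (N : ℕ) {a : α} {b : β} (hab : Z a b) :
    ReachesIn R G N a ↔ ReachesIn S H N b := by
  induction N generalizing a b with
  | zero => rw [reachesIn_zero, reachesIn_zero, goal hab]
  | succ N ih =>
    simp only [reachesIn_succ]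
    constructor
    · rintro ⟨a', haa', ha'⟩
      obtain ⟨b', hbb', hab'⟩ := forth hab haa'
      exact ⟨b', hbb', (ih hab').1 ha'⟩
    · rintro ⟨b', hbb', hb'⟩
      obtain ⟨a', haa', hab'⟩ := back hab hbb'
      exact ⟨a', haa', (ih hab').2 hb'⟩

/-- The first `d` steps of `f` form an `R`-path from `f 0` into `G`, and no such path from `f 0`
is shorter. -/
structure IsShortestPath (R : α → α → Prop) (G : α → Prop) (d : ℕ) (f : ℕ → α) : Prop where
  step : ∀ i < d, R (f i) (f (i + 1))
  goal : G (f d)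
  le_of_reachesIn : ∀ N, ReachesIn R G N (f 0) → d ≤ N

theorem ReachesIn.exists_isShortestPath {N : ℕ} {a : α} (h : ReachesIn R G N a) :
    ∃ d ≤ N, ∃ f, f 0 = a ∧ IsShortestPath R G d f := by
  classical
  have hex : ∃ N, ReachesIn R G N a := ⟨N, h⟩
  obtain ⟨f, rfl, hf, hG⟩ := Nat.find_spec hex
  exact ⟨_, Nat.find_min' hex h, f, rfl, hf, hG, fun _ hK => Nat.find_min' hex hK⟩

namespace IsShortestPath

variable {d : ℕ} {f : ℕ → α}

theorem not_goal (hf : IsShortestPath R G d f) {i : ℕ} (hi : i < d) : ¬ G (f i) := fun hG =>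
  absurd (hf.le_of_reachesIn i ⟨f, rfl, fun j hj => hf.step j (hj.trans hi), hG⟩) hi.not_ge

theorem ne_of_lt (hf : IsShortestPath R G d f) {i j : ℕ} (hij : i < j) (hj : j ≤ d) :
    f i ≠ f j := by
  intro heq
  have hshort : ReachesIn R G (d - j) (f i) :=
    ⟨fun k => f (j + k), heq.symm, fun k hk => hf.step (j + k) (by lia),
      by simpa only [Nat.add_sub_cancel' hj] using hf.goal⟩
  have := hf.le_of_reachesIn _ (hshort.of_path fun k hk => hf.step k (by lia))
  lia

end IsShortestPath

end ShortestPaths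

section Boards

variable {m n k : ℕ}

/-- An unlabelled configuration: each cell is empty (`none`), or holds a horizontal (`some true`)
or vertical (`some false`) car. -/
abbrev RHBoard (m n : ℕ) := Cell m n → Option Bool

theorem hAdj_comm {u v : Cell m n} : hAdj u v ↔ hAdj v u := by
  simp only [hAdj, eq_comm, or_comm]

theorem vAdj_comm {u v : Cell m n} : vAdj u v ↔ vAdj v u := by
  simp only [vAdj, eq_comm, or_comm]

instance (u v : Cell m n) : Decidable (hAdj u v) := inferInstanceAs (Decidable (_ ∧ _))

instance (u v : Cell m n) : Decidable (vAdj u v) := inferInstanceAs (Decidable (_ ∧ _))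

namespace RHBoard

/-- The car at `v` is oriented along the edge from `v` to its neighbour `u`, so that it may slide
to `u` as soon as that cell is empty. -/
def CanSlide (B : RHBoard m n) (v u : Cell m n) : Prop :=
  (hAdj v u ∧ B v = some true) ∨ (vAdj v u ∧ B v = some false)

instance (B : RHBoard m n) (v u : Cell m n) : Decidable (B.CanSlide v u) :=
  inferInstanceAs (Decidable (_ ∨ _))

/-- The board after exchanging the contents of `u` and `v`. -/
def slide (B : RHBoard m n) (u v : Cell m n) : RHBoard m n := B ∘ Equiv.swap u v

/-- A legal move between unlabelled configurations. -/
def Move (B B' : RHBoard m n) : Prop :=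
  ∃ u v, B u = none ∧ B.CanSlide v u ∧ B' = B.slide u v

/-- The leftmost cell of row `r` holds a horizontal car, which is then the target of that row. -/
abbrev Solved [NeZero n] (r : Fin m) (B : RHBoard m n) : Prop := B (r, 0) = some true

/-- `u` is the only empty cell. -/
def HoleAt (B : RHBoard m n) (u : Cell m n) : Prop := ∀ x, B x = none ↔ x = u

variable {B B' : RHBoard m n} {u v p : Cell m n}

@[simp]
theorem slide_apply_left : B.slide u v u = B v := by simp [slide]

@[simp]
theorem slide_apply_right : B.slide u v v = B u := by simp [slide]

@[simp]
theorem slide_self : B.slide u u = B := by simp [slide]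

@[simp]
theorem slide_slide : (B.slide u v).slide v u = B := by
  simp [slide, Function.comp_assoc, Equiv.swap_comm v u, ← Equiv.coe_trans]

theorem CanSlide.slide (h : B.CanSlide v u) : (B.slide u v).CanSlide u v := by
  simpa only [CanSlide, slide_apply_left, hAdj_comm, vAdj_comm] using h

theorem Move.symm (h : Move B B') : Move B' B := by
  obtain ⟨u, v, hu, hslide, rfl⟩ := h
  exact ⟨v, u, by rw [slide_apply_right, hu], hslide.slide, slide_slide.symm⟩

theorem HoleAt.slide (h : B.HoleAt u) (v : Cell m n) : (B.slide u v).HoleAt v := fun x => by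
  rw [RHBoard.slide, Function.comp_apply, h, Equiv.swap_apply_eq_iff, Equiv.swap_apply_left]

theorem HoleAt.exists_slide (hB : B.HoleAt u) (h : Move B B') :
    ∃ v, B.CanSlide v u ∧ B' = B.slide u v := by
  obtain ⟨w, v, hw, hslide, rfl⟩ := h
  obtain rfl := (hB w).1 hw
  exact ⟨v, hslide, rfl⟩

theorem exists_holeAt_of_path {f : ℕ → RHBoard m n} {i : ℕ} (h0 : ∃ u, (f 0).HoleAt u)
    (hf : ∀ j < i, Move (f j) (f (j + 1))) : ∃ u, (f i).HoleAt u := by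
  induction i with
  | zero => exact h0
  | succ i ih =>
    obtain ⟨u, hu⟩ := ih fun j hj => hf j (by lia)
    obtain ⟨v, -, hv⟩ := hu.exists_slide (hf i i.lt_succ_self)
    exact ⟨v, hv ▸ hu.slide v⟩

/-- Starting from the board `B` with its hole at `u`, the hole can make `N` moves, the first one not
to `p` and none of them undoing the previous one, such that every board it produces satisfies `P`
and the last board satisfies `Q`. Taking `p = u` leaves the first move unrestricted. -/
def NoUTurnPath (P Q : RHBoard m n → Prop) : ℕ → Cell m n → Cell m n → RHBoard m n → Prop
  | 0, _, _, B => Q B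
  | N + 1, p, u, B =>
    ∃ v, v ≠ p ∧ B.CanSlide v u ∧ P (B.slide u v) ∧ NoUTurnPath P Q N u v (B.slide u v)

instance decidableNoUTurnPath (P Q : RHBoard m n → Prop) [DecidablePred P] [DecidablePred Q] :
    ∀ N p u B, Decidable (NoUTurnPath P Q N p u B)
  | 0, _, _, B => inferInstanceAs (Decidable (Q B))
  | N + 1, p, u, B =>
    have := decidableNoUTurnPath P Q N
    inferInstanceAs (Decidable (∃ v, v ≠ p ∧ B.CanSlide v u ∧ P (B.slide u v) ∧
      NoUTurnPath P Q N u v (B.slide u v)))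

theorem NoUTurnPath.reachesIn {P Q : RHBoard m n → Prop} {N : ℕ} (hB : B u = none)
    (h : NoUTurnPath P Q N p u B) : ReachesIn Move Q N B := by
  induction N generalizing p u B with
  | zero => exact reachesIn_zero.2 h
  | succ N ih =>
    obtain ⟨v, -, hslide, -, hpath⟩ := h
    exact reachesIn_succ.2 ⟨B.slide u v, ⟨u, v, hB, hslide, rfl⟩,
      ih (by rw [slide_apply_right, hB]) hpath⟩

theorem noUTurnPath_of_path {P Q : RHBoard m n → Prop} {N : ℕ} {f : ℕ → RHBoard m n}
    (hole : (f 0).HoleAt u) (move : ∀ i < N, Move (f i) (f (i + 1)))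
    (first : 0 < N → f 1 ≠ (f 0).slide u p) (noUTurn : ∀ i, i + 2 ≤ N → f (i + 2) ≠ f i)
    (hP : ∀ i < N, P (f (i + 1))) (hQ : Q (f N)) : NoUTurnPath P Q N p u (f 0) := by
  induction N generalizing p u f with
  | zero => exact hQ
  | succ N ih =>
    obtain ⟨v, hslide, hv⟩ := hole.exists_slide (move 0 N.succ_pos)
    refine ⟨v, ?_, hslide, hv ▸ hP 0 N.succ_pos, hv ▸ ih (f := fun i => f (i + 1)) ?_
      (fun i hi => move (i + 1) (by lia)) (fun hN => ?_)
      (fun i hi => noUTurn (i + 1) (by lia)) (fun i hi => hP (i + 1) (by lia)) hQ⟩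
    · rintro rfl
      exact first N.succ_pos hv
    · exact hv ▸ hole.slide v
    · simpa only [zero_add, hv, slide_slide] using noUTurn 0 (by lia)

/-- The board with hole at `u` whose horizontal cars are the set bits of `M`, the cells being
numbered in row-major order. Bit `u` of `M` is ignored. -/
def ofMask (u : Cell m n) (M : ℕ) : RHBoard m n := fun x =>
  if x = u then none else some (M.testBit (finProdFinEquiv x))

theorem holeAt_ofMask (u : Cell m n) (M : ℕ) : (ofMask u M).HoleAt u := fun x => by
  simp [ofMask]

theorem HoleAt.exists_ofMask_eq (h : B.HoleAt u) :
    ∃ M < 2 ^ (m * n), ofMask u M = B := by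
  refine ⟨Nat.ofBits fun i : Fin (m * n) => B (finProdFinEquiv.symm i) == some true,
    Nat.ofBits_lt_two_pow _, funext fun x => ?_⟩
  have hx := h x
  simp only [ofMask, Nat.testBit_ofBits_lt _ _ (finProdFinEquiv x).isLt, Fin.eta,
    Equiv.symm_apply_apply]
  rcases hBx : B x with - | - | - <;> simp_all

end RHBoard

namespace RHConfig

/-- The unlabelled configuration underlying `C`. -/
noncomputable def board (C : RHConfig m n k) : RHBoard m n :=
  Function.extend C.pos (fun i => some (C.ori i)) fun _ => none

variable {C C' : RHConfig m n k} {u v x : Cell m n}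

@[simp]
theorem board_pos (C : RHConfig m n k) (i : Fin k) : C.board (C.pos i) = some (C.ori i) :=
  C.inj.extend_apply _ _ i

theorem board_eq_none_iff : C.board x = none ↔ ∀ i, C.pos i ≠ x := by
  refine ⟨fun h i hi => ?_, fun h => Function.extend_apply' _ _ _ fun ⟨i, hi⟩ => h i hi⟩
  simp [← hi] at h

theorem board_eq_some_iff {o : Bool} : C.board x = some o ↔ ∃ i, C.pos i = x ∧ C.ori i = o := by
  constructor
  · intro h
    obtain ⟨i, rfl⟩ : ∃ i, C.pos i = x := by
      by_contra! hx
      simp [board_eq_none_iff.2 hx] at h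
    exact ⟨i, rfl, by simpa using h⟩
  · rintro ⟨i, rfl, rfl⟩
    exact C.board_pos i

theorem exists_holeAt_board (hk : k + 1 = m * n) (C : RHConfig m n k) :
    ∃ u, C.board.HoleAt u := by
  have hcard : (Finset.univ.image C.pos)ᶜ.card = 1 := by
    rw [Finset.card_compl, Finset.card_image_of_injective _ C.inj]
    simp [← hk]
  obtain ⟨u, hu⟩ := Finset.card_eq_one.1 hcard
  exact ⟨u, fun x => by simpa [board_eq_none_iff] using Finset.ext_iff.1 hu x⟩

theorem board_eq_slide (hori : C'.ori = C.ori)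
    (hpos : ∀ i, C'.pos i = Equiv.swap u v (C.pos i)) : C'.board = C.board.slide u v := by
  funext x
  have hx (i : Fin k) : C'.pos i = x ↔ C.pos i = Equiv.swap u v x := by
    rw [hpos, Equiv.swap_apply_eq_iff]
  refine Option.ext fun o => ?_
  simp only [RHBoard.slide, Function.comp_apply, board_eq_some_iff, hx, hori]

theorem canSlide_board_pos {i : Fin k} : C.board.CanSlide (C.pos i) u ↔
    (C.ori i = true ∧ hAdj (C.pos i) u) ∨ (C.ori i = false ∧ vAdj (C.pos i) u) := by
  simp only [RHBoard.CanSlide, board_pos, Option.some.injEq, and_comm]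

theorem exists_rhMove_of_move {B : RHBoard m n} (h : RHBoard.Move C.board B) :
    ∃ C', RHMove C C' ∧ C'.board = B := by
  obtain ⟨u, v, hu, hslide, rfl⟩ := h
  obtain ⟨i, rfl⟩ : ∃ i, C.pos i = v := by
    rcases hslide with ⟨-, hv⟩ | ⟨-, hv⟩ <;> exact (board_eq_some_iff.1 hv).imp fun _ => And.left
  rw [board_eq_none_iff] at hu
  let C' : RHConfig m n k :=
    { ori := C.ori
      pos := Equiv.swap u (C.pos i) ∘ C.pos
      inj := (Equiv.injective _).comp C.inj }
  have hi : C'.pos i = u := Equiv.swap_apply_right _ _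
  refine ⟨C', ⟨rfl, i, fun j hj => ?_, by rwa [hi], by rwa [hi, ← canSlide_board_pos]⟩,
    board_eq_slide rfl fun _ => rfl⟩
  exact Equiv.swap_apply_of_ne_of_ne (hu j) (C.inj.ne hj)

end RHConfig

namespace RHMove

variable {C C' : RHConfig m n k} {i j : Fin k}

theorem move_board (h : RHMove C C') : RHBoard.Move C.board C'.board := by
  obtain ⟨hori, i, hrest, hfree, hadj⟩ := h
  refine ⟨C'.pos i, C.pos i, RHConfig.board_eq_none_iff.2 hfree,
    RHConfig.canSlide_board_pos.2 hadj, RHConfig.board_eq_slide hori fun j => ?_⟩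
  obtain rfl | hj := eq_or_ne j i
  · rw [Equiv.swap_apply_right]
  · rw [hrest j hj, Equiv.swap_apply_of_ne_of_ne (hfree j) (C.inj.ne hj)]

theorem row_eq (h : RHMove C C') (hi : C.ori i = true) : (C'.pos i).1 = (C.pos i).1 := by
  obtain ⟨-, l, hrest, -, hadj⟩ := h
  obtain rfl | hil := eq_or_ne i l
  · rcases hadj with ⟨-, hrow, -⟩ | ⟨hvert, -⟩
    · exact hrow.symm
    · simp [hi] at hvert
  · rw [hrest i hil]

theorem col_lt_col (h : RHMove C C') (hi : C.ori i = true) (hj : C.ori j = true)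
    (hrow : (C.pos i).1 = (C.pos j).1) (hlt : (C.pos i).2 < (C.pos j).2) :
    (C'.pos i).2 < (C'.pos j).2 := by
  have hne : C'.pos i ≠ C'.pos j := C'.inj.ne (by rintro rfl; exact hlt.false)
  have hcol : (C'.pos i).2 ≠ (C'.pos j).2 := fun hcol =>
    hne (Prod.ext (by rw [h.row_eq hi, h.row_eq hj, hrow]) hcol)
  obtain ⟨-, l, hrest, -, hadj⟩ := h
  have hstep (a : Fin k) (ha : C.ori a = true) (hal : a = l) :
      (C.pos a).2.val + 1 = (C'.pos a).2 ∨ (C'.pos a).2.val + 1 = (C.pos a).2 := by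
    subst hal
    have hadj : hAdj (C.pos a) (C'.pos a) := by simpa [ha] using hadj
    exact hadj.2
  grind

end RHMove

namespace RHConfig

/-- `t` is the leftmost horizontal car of row `r`. -/
structure IsTarget (C : RHConfig m n k) (r : Fin m) (t : Fin k) : Prop where
  ori : C.ori t = true
  row : (C.pos t).1 = r
  col_le : ∀ j, C.ori j = true → (C.pos j).1 = r → (C.pos t).2 ≤ (C.pos j).2

namespace IsTarget

variable {C C' : RHConfig m n k} {r : Fin m} {t : Fin k}

theorem of_rhMove (ht : C.IsTarget r t) (h : RHMove C C') : C'.IsTarget r t where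
  ori := by rw [h.1, ht.ori]
  row := by rw [h.row_eq ht.ori, ht.row]
  col_le j hj hrow := by
    rw [h.1] at hj
    rw [h.row_eq hj] at hrow
    obtain rfl | hjt := eq_or_ne j t
    · exact le_rfl
    have hcol : (C.pos t).2 ≠ (C.pos j).2 := fun hcol =>
      hjt (C.inj (Prod.ext (hrow.trans ht.row.symm) hcol.symm))
    exact (h.col_lt_col ht.ori hj (ht.row.trans hrow.symm)
      ((ht.col_le j hj hrow).lt_of_ne hcol)).le

theorem pos_eq_iff [NeZero n] (ht : C.IsTarget r t) :
    C.pos t = (r, 0) ↔ C.board.Solved r := by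
  rw [RHBoard.Solved, board_eq_some_iff]
  refine ⟨fun h => ⟨t, h, ht.ori⟩, fun ⟨i, hi, hori⟩ => Prod.ext ht.row ?_⟩
  have hle := ht.col_le i hori (by rw [hi])
  rw [hi] at hle
  exact nonpos_iff_eq_zero.1 hle

theorem reachesIn_iff [NeZero n] (ht : C.IsTarget r t) (N : ℕ) :
    ReachesIn RHMove (fun C => C.pos t = (r, 0)) N C ↔
      ReachesIn RHBoard.Move (RHBoard.Solved r) N C.board := by
  refine reachesIn_iff_of_bisimulation (Z := fun C B => C.IsTarget r t ∧ C.board = B)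
    ?_ ?_ ?_ N ⟨ht, rfl⟩
  · rintro C _ C' ⟨ht, rfl⟩ h
    exact ⟨C'.board, h.move_board, ht.of_rhMove h, rfl⟩
  · rintro C _ _ ⟨ht, rfl⟩ h
    obtain ⟨C', h', rfl⟩ := exists_rhMove_of_move h
    exact ⟨C', h', ht.of_rhMove h', rfl⟩
  · rintro C _ ⟨ht, rfl⟩
    exact ht.pos_eq_iff

end IsTarget

end RHConfig

namespace RHBoard

theorem HoleAt.eq_slide_of_solved {B B' : RHBoard m (n + 2)} {u : Cell m (n + 2)} {r : Fin m}
    (hB : B.HoleAt u) (h : Move B B') (hunsolved : ¬ B.Solved r) (hsolved : B'.Solved r) :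
    u = (r, 0) ∧ B (r, 1) = some true ∧ B' = B.slide (r, 0) (r, 1) := by
  obtain ⟨v, hslide, rfl⟩ := hB.exists_slide h
  obtain rfl : u = (r, 0) := by
    by_contra hu
    obtain rfl | hv := eq_or_ne v (r, 0)
    · simp [Solved, (hB u).2 rfl] at hsolved
    · rw [Solved, RHBoard.slide, Function.comp_apply,
        Equiv.swap_apply_of_ne_of_ne (Ne.symm hu) hv.symm] at hsolved
      exact hunsolved hsolved
  rw [Solved, slide_apply_left] at hsolved
  have hadj : hAdj v (r, 0) := by simpa [CanSlide, hsolved] using hslide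
  obtain rfl : v = (r, 1) := Prod.ext hadj.1 <| Fin.ext <| by simpa [eq_comm] using hadj.2
  exact ⟨rfl, hsolved, rfl⟩

theorem noUTurnPath_of_isShortestPath {Q : RHBoard m n → Prop} {d : ℕ} {f : ℕ → RHBoard m n}
    {u : Cell m n} (hole : (f 0).HoleAt u) (hf : IsShortestPath Move Q d f) :
    NoUTurnPath (fun _ => True) Q d u u (f 0) := by
  refine noUTurnPath_of_path hole hf.step (fun hd => ?_)
    (fun i hi => (hf.ne_of_lt (by lia) hi).symm) (fun _ _ => trivial) hf.goal
  rw [slide_self]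
  exact (hf.ne_of_lt one_pos hd).symm

theorem isLeast_of_noUTurnPath {Q : RHBoard m n → Prop} {d : ℕ} {B : RHBoard m n} {u : Cell m n}
    (hole : B.HoleAt u) (hpath : NoUTurnPath (fun _ => True) Q d u u B)
    (hshort : ∀ N < d, ¬ NoUTurnPath (fun _ => True) Q N u u B) :
    IsLeast {N | ReachesIn Move Q N B} d := by
  refine ⟨hpath.reachesIn ((hole u).2 rfl), fun N hN => ?_⟩
  obtain ⟨e, heN, f, rfl, hf⟩ := hN.exists_isShortestPath
  by_contra! hlt
  exact hshort e (by lia) (noUTurnPath_of_isShortestPath hole hf)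

theorem noUTurnPath_reverse_of_isShortestPath {r : Fin m} {N K : ℕ} {f : ℕ → RHBoard m (n + 2)}
    (hole : ∃ u, (f 0).HoleAt u) (hf : IsShortestPath Move (Solved r) (N + 1) f) (hK : K ≤ N) :
    (f N).HoleAt (r, 0) ∧ f N (r, 1) = some true ∧
      NoUTurnPath (fun B => ¬ B.Solved r) (fun _ => True) K (r, 1) (r, 0) (f N) := by
  obtain ⟨u, hu⟩ := exists_holeAt_of_path (i := N) hole fun j hj => hf.step j (by lia)
  obtain ⟨rfl, hcar, hlast⟩ :=
    hu.eq_slide_of_solved (hf.step N N.lt_succ_self) (hf.not_goal N.lt_succ_self) hf.goal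
  refine ⟨hu, hcar, noUTurnPath_of_path (f := fun i => f (N - i)) hu (fun i hi => ?_)
    (fun hpos => ?_) (fun i hi => hf.ne_of_lt (by lia) (by lia))
    (fun i _ => hf.not_goal (by lia)) trivial⟩
  · have hstep := (hf.step (N - (i + 1)) (by lia)).symm
    rwa [show N - (i + 1) + 1 = N - i by lia] at hstep
  · rw [Nat.sub_zero, ← hlast]
    exact hf.ne_of_lt (by lia) le_rfl

section ThreeByThree

variable {B : RHBoard 3 3} {r : Fin 3}

theorem HoleAt.not_noUTurnPath_twelve (hole : B.HoleAt (r, 0)) (hcar : B (r, 1) = some true) :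
    ¬ NoUTurnPath (fun B => ¬ B.Solved r) (fun _ => True) 12 (r, 1) (r, 0) B := by
  have search : ∀ r : Fin 3, ∀ M < 2 ^ (3 * 3),
      (ofMask (r, 0) M : RHBoard 3 3) (r, 1) = some true →
        ¬ NoUTurnPath (fun B : RHBoard 3 3 => ¬ B.Solved r) (fun _ => True) 12 (r, 1) (r, 0)
          (ofMask (r, 0) M) := by
    decide +kernel
  obtain ⟨M, hM, rfl⟩ := hole.exists_ofMask_eq
  exact search r M hM hcar

theorem exists_reachesIn_le_twelve {N : ℕ} (h : ReachesIn Move (Solved r) N B)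
    (hole : ∃ u, B.HoleAt u) : ∃ d ≤ 12, ReachesIn Move (Solved r) d B := by
  obtain ⟨d, -, f, rfl, hf⟩ := h.exists_isShortestPath
  refine ⟨d, ?_, f, rfl, hf.step, hf.goal⟩
  by_contra! hd
  obtain ⟨N, rfl⟩ := Nat.exists_eq_succ_of_ne_zero (by lia : d ≠ 0)
  obtain ⟨hN, hcar, hpath⟩ := noUTurnPath_reverse_of_isShortestPath hole hf (K := 12) (by lia)
  exact hN.not_noUTurnPath_twelve hcar hpath

end ThreeByThree

end RHBoard

end Boards

/-- A configuration of solution length `12` for exit row `0`, found by computer; the target is the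
car number `2`. With `H` and `V` for horizontal and vertical cars it reads `VVH / VHV / H.V`. -/
def hardestConfig : RHConfig 3 3 8 where
  ori := ![false, false, true, false, true, false, true, false]
  pos := ![(0, 0), (0, 1), (0, 2), (1, 0), (1, 1), (1, 2), (2, 0), (2, 2)]
  inj := by decide

theorem isTarget_hardestConfig : hardestConfig.IsTarget 0 2 where
  ori := rfl
  row := rfl
  col_le := by decide

theorem board_hardestConfig : hardestConfig.board = RHBoard.ofMask (2, 1) 0b001010100 := by
  funext x
  have hx : (RHBoard.ofMask (2, 1) 0b001010100 x = none ∧ ∀ i, hardestConfig.pos i ≠ x) ∨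
      ∃ i, hardestConfig.pos i = x ∧
        RHBoard.ofMask (2, 1) 0b001010100 x = some (hardestConfig.ori i) := by
    decide +revert
  rcases hx with ⟨hnone, hpos⟩ | ⟨i, rfl, hori⟩
  · rw [hnone, RHConfig.board_eq_none_iff.2 hpos]
  · rw [hori, RHConfig.board_pos]

theorem isLeast_hardestConfig :
    IsLeast {N | ReachesIn RHMove (fun C => C.pos 2 = (0, 0)) N hardestConfig} 12 := by
  simp only [isTarget_hardestConfig.reachesIn_iff, board_hardestConfig]
  exact RHBoard.isLeast_of_noUTurnPath (RHBoard.holeAt_ofMask _ _)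
    (hpath := by decide +kernel) (hshort := by decide +kernel)

/-- over all 3×3 Unit Rush Hour configurations with exactly one
empty cell (hence exactly 8 cars), any exit row `r` containing at least one
horizontal car, with target `t` the leftmost horizontal car on row `r`, that
are solvable, the maximum of the minimal number of legal moves needed to bring
the target car to cell `(r,0)` is exactly 12. -/
theorem stmt_9 :
    IsGreatest {d : ℕ | ∃ (C : RHConfig 3 3 8) (r : Fin 3) (t : Fin 8),
      C.ori t = true ∧ (C.pos t).1 = r ∧
      (∀ j, C.ori j = true → (C.pos j).1 = r → (C.pos t).2 ≤ (C.pos j).2) ∧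
      IsLeast {N : ℕ | ∃ f : ℕ → RHConfig 3 3 8, f 0 = C ∧
        (∀ i < N, RHMove (f i) (f (i + 1))) ∧
        (f N).pos t = (r, (0 : Fin 3))} d} 12 := by
  refine ⟨⟨hardestConfig, 0, 2, isTarget_hardestConfig.ori, isTarget_hardestConfig.row,
    isTarget_hardestConfig.col_le, isLeast_hardestConfig⟩, ?_⟩
  rintro d ⟨C, r, t, hori, hrow, hcol, hd⟩
  have ht : C.IsTarget r t := ⟨hori, hrow, hcol⟩
  obtain ⟨N, hN, hsol⟩ :=
    RHBoard.exists_reachesIn_le_twelve ((ht.reachesIn_iff d).1 hd.1) (C.exists_holeAt_board rfl)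
  exact (hd.2 ((ht.reachesIn_iff N).2 hsol)).trans hN
end

section
/- Over all 4×4 Unit Rush Hour configurations with exactly one empty cell, any choice of exit row r containing at least one horizontal car (with target the leftmost horizontal car on row r), that are solvable, the maximum of the minimal number of legal moves needed to reach a solved configuration is exactly 40. -/
/-! Track only the empty cell and the set of cells holding horizontal cars. Sliding the car at `v`
into the empty cell `u` transposes `u` and `v` in this pattern, which determines the possible moves,
and the target is home exactly when the leftmost cell of its row holds a horizontal car, since
horizontal cars keep their row and their order within it. So solution lengths depend on the pattern
alone.

A 4 × 4 pattern is encoded as a number below `2 ^ 20`, and a set of patterns as the number whose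
binary digits are its indicator function. Sliding a car between two given cells changes the code by
a constant, so a breadth-first search from all solved patterns is a sequence of shifts, masks and
unions of such numbers. For every exit row it is stationary after 40 rounds, and for one row a
pattern appears only in round 40. -/

namespace RushHour

section Reachability

variable {α β : Type*}

/-- Some path of exactly `N` steps of the relation `R` leads from the given point to a point
satisfying the goal `G`. -/
def ReachesIn (R : α → α → Prop) (G : α → Prop) : ℕ → α → Prop
  | 0, a => G a
  | N + 1, a => ∃ b, R a b ∧ ReachesIn R G N b

variable {R : α → α → Prop} {G : α → Prop} {R' : β → β → Prop} {G' : β → Prop}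

theorem reachesIn_iff_exists_path {N : ℕ} {a : α} :
    ReachesIn R G N a ↔ ∃ f : ℕ → α, f 0 = a ∧ (∀ i < N, R (f i) (f (i + 1))) ∧ G (f N) := by
  induction N generalizing a with
  | zero =>
    constructor
    · exact fun ha => ⟨fun _ => a, rfl, by simp, ha⟩
    · rintro ⟨f, rfl, -, hG⟩
      exact hG
  | succ N ih =>
    constructor
    · rintro ⟨b, hab, hb⟩
      obtain ⟨f, rfl, hstep, hG⟩ := ih.1 hb
      exact ⟨fun i => Nat.casesOn i a f, rfl, Nat.forall_lt_succ_left.2 ⟨hab, hstep⟩, hG⟩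
    · rintro ⟨f, rfl, hstep, hG⟩
      obtain ⟨hfirst, hrest⟩ := Nat.forall_lt_succ_left.1 hstep
      exact ⟨f 1, hfirst, ih.2 ⟨fun i => f (i + 1), rfl, hrest, hG⟩⟩

theorem exists_reachesIn_le_succ_iff {n : ℕ} {a : α} :
    (∃ N ≤ n + 1, ReachesIn R G N a) ↔
      (∃ N ≤ n, ReachesIn R G N a) ∨ ∃ b, R a b ∧ ∃ N ≤ n, ReachesIn R G N b := by
  constructor
  · rintro ⟨_ | N, hN, ha⟩
    · exact .inl ⟨0, n.zero_le, ha⟩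
    · obtain ⟨b, hab, hb⟩ := ha
      exact .inr ⟨b, hab, N, Nat.le_of_succ_le_succ hN, hb⟩
  · rintro (⟨N, hN, ha⟩ | ⟨b, hab, N, hN, hb⟩)
    · exact ⟨N, Nat.le_succ_of_le hN, ha⟩
    · exact ⟨N + 1, Nat.succ_le_succ hN, b, hab, hb⟩

theorem reachesIn_iff_of_bisimulation {S : α → β → Prop}
    (goal : ∀ {a b}, S a b → (G a ↔ G' b))
    (forth : ∀ {a b a'}, S a b → R a a' → ∃ b', R' b b' ∧ S a' b')
    (back : ∀ {a b b'}, S a b → R' b b' → ∃ a', R a a' ∧ S a' b')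
    {N : ℕ} {a : α} {b : β} (hab : S a b) : ReachesIn R G N a ↔ ReachesIn R' G' N b := by
  induction N generalizing a b with
  | zero => exact goal hab
  | succ N ih =>
    constructor
    · rintro ⟨a', ha, ha'⟩
      obtain ⟨b', hb, hab'⟩ := forth hab ha
      exact ⟨b', hb, (ih hab').1 ha'⟩
    · rintro ⟨b', hb, hb'⟩
      obtain ⟨a', ha, hab'⟩ := back hab hb
      exact ⟨a', ha, (ih hab').2 hb'⟩

end Reachability

section Patterns

variable {m n k : ℕ}

instance (u v : Cell m n) : Decidable (hAdj u v) := inferInstanceAs (Decidable (_ ∧ _))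

instance (u v : Cell m n) : Decidable (vAdj u v) := inferInstanceAs (Decidable (_ ∧ _))

/-- A car of orientation `h` (`true` = horizontal) at `v` can slide to `u` if `u` is empty. -/
def SlideAdj (h : Bool) (v u : Cell m n) : Prop :=
  (h = true ∧ hAdj v u) ∨ (h = false ∧ vAdj v u)

instance (h : Bool) (v u : Cell m n) : Decidable (SlideAdj h v u) :=
  inferInstanceAs (Decidable (_ ∨ _))

theorem SlideAdj.ne {h : Bool} {v u : Cell m n} (hvu : SlideAdj h v u) : v ≠ u := by
  rintro rfl
  simp [SlideAdj, hAdj, vAdj] at hvu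

/-- What a configuration with one empty cell looks like when cars of the same orientation are
not told apart: the empty cell and the cells holding horizontal cars. -/
structure Pattern (m n : ℕ) where
  hole : Cell m n
  horizontal : Finset (Cell m n)
  hole_notMem : hole ∉ horizontal

namespace Pattern

/-- The pattern after the car at `v` has slid into the hole; adjacency is not required. -/
def slide (P : Pattern m n) (v : Cell m n) : Pattern m n where
  hole := v
  horizontal := P.horizontal.map (Equiv.swap v P.hole).toEmbedding
  hole_notMem := by simpa [Finset.mem_map_equiv] using P.hole_notMem

/-- A legal move, seen on patterns. -/
def Move (P Q : Pattern m n) : Prop :=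
  ∃ v, SlideAdj (v ∈ P.horizontal) v P.hole ∧ Q = P.slide v

end Pattern

/-- `P` is the pattern of the configuration `C`. -/
structure HasPattern (C : RHConfig m n k) (P : Pattern m n) : Prop where
  pos_ne_hole (i : Fin k) : C.pos i ≠ P.hole
  mem_horizontal (v : Cell m n) : v ∈ P.horizontal ↔ ∃ i, C.pos i = v ∧ C.ori i = true

theorem exists_hasPattern (hk : k < m * n) (C : RHConfig m n k) : ∃ P, HasPattern C P := by
  obtain ⟨u, hu⟩ : ∃ u, ∀ i, C.pos i ≠ u := by
    by_contra! hsurj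
    simpa [hk.not_ge] using Fintype.card_le_of_surjective C.pos hsurj
  refine ⟨⟨u, (Finset.univ.filter (C.ori · = true)).image C.pos, by simp [hu]⟩, hu, ?_⟩
  simp [and_comm]

theorem Pattern.exists_config (hk : k + 1 = m * n) (P : Pattern m n) :
    ∃ C : RHConfig m n k, HasPattern C P := by
  have hcard : Fintype.card {v // v ≠ P.hole} = k := by simp [← hk]
  let e := Fintype.equivFinOfCardEq hcard
  refine ⟨⟨fun i => (e.symm i).1 ∈ P.horizontal, fun i => e.symm i,
    Subtype.val_injective.comp e.symm.injective⟩, fun i => (e.symm i).2, fun v => ?_⟩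
  constructor
  · intro hv
    exact ⟨e ⟨v, ne_of_mem_of_not_mem hv P.hole_notMem⟩, by simp, by simpa⟩
  · rintro ⟨i, rfl, hi⟩
    simpa using hi

namespace HasPattern

variable {C C' : RHConfig m n k} {P Q : Pattern m n}

theorem pos_mem_horizontal (hP : HasPattern C P) (i : Fin k) :
    C.pos i ∈ P.horizontal ↔ C.ori i = true := by
  simp [hP.mem_horizontal, C.inj.eq_iff]

theorem exists_pos_eq (hP : HasPattern C P) (hk : k + 1 = m * n) {v : Cell m n}
    (hv : v ≠ P.hole) : ∃ i, C.pos i = v := by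
  have hrange : Finset.univ.image C.pos = Finset.univ.erase P.hole := by
    apply Finset.eq_of_subset_of_card_le
    · simp [Finset.subset_iff, hP.pos_ne_hole]
    · simp [Finset.card_image_of_injective _ C.inj, ← hk]
  have hmem : v ∈ Finset.univ.image C.pos := by simp [hrange, hv]
  simpa using hmem

theorem rhMove_iff (hP : HasPattern C P) (hk : k + 1 = m * n) :
    RHMove C C' ↔ C'.ori = C.ori ∧ ∃ i, SlideAdj (C.ori i) (C.pos i) P.hole ∧
      C'.pos = Equiv.swap (C.pos i) P.hole ∘ C.pos := by
  refine and_congr_right fun _ => exists_congr fun i => ⟨?_, ?_⟩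
  · rintro ⟨hstay, hempty, hadj⟩
    have hi : C'.pos i = P.hole := by
      by_contra hne
      obtain ⟨j, hj⟩ := hP.exists_pos_eq hk hne
      exact hempty j hj
    refine ⟨hi ▸ hadj, funext fun j => ?_⟩
    obtain rfl | hji := eq_or_ne j i
    · simp [hi]
    · simp [hstay j hji, Equiv.swap_apply_of_ne_of_ne (C.inj.ne hji) (hP.pos_ne_hole j)]
  · rintro ⟨hadj, hpos⟩
    have hi : C'.pos i = P.hole := by simp [hpos]
    refine ⟨fun j hji => ?_, by simpa [hi] using hP.pos_ne_hole, hi ▸ hadj⟩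
    simp [hpos, Equiv.swap_apply_of_ne_of_ne (C.inj.ne hji) (hP.pos_ne_hole j)]

theorem slide (hP : HasPattern C P) {i : Fin k} (hori : C'.ori = C.ori)
    (hpos : C'.pos = Equiv.swap (C.pos i) P.hole ∘ C.pos) :
    HasPattern C' (P.slide (C.pos i)) where
  pos_ne_hole j := by simpa [Pattern.slide, hpos, Equiv.swap_apply_eq_iff] using hP.pos_ne_hole j
  mem_horizontal v := by
    simp [Pattern.slide, Finset.mem_map_equiv, hP.mem_horizontal, hpos, hori,
      Equiv.swap_apply_eq_iff]

theorem exists_pattern_move (hP : HasPattern C P) (hk : k + 1 = m * n) (hC : RHMove C C') :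
    ∃ Q, P.Move Q ∧ HasPattern C' Q := by
  obtain ⟨hori, i, hadj, hpos⟩ := (hP.rhMove_iff hk).1 hC
  exact ⟨_, ⟨C.pos i, by simpa [hP.pos_mem_horizontal] using hadj, rfl⟩, hP.slide hori hpos⟩

theorem exists_rhMove (hP : HasPattern C P) (hk : k + 1 = m * n) (hQ : P.Move Q) :
    ∃ C', RHMove C C' ∧ HasPattern C' Q := by
  obtain ⟨v, hadj, rfl⟩ := hQ
  obtain ⟨i, rfl⟩ := hP.exists_pos_eq hk hadj.ne
  let C' : RHConfig m n k :=
    ⟨C.ori, Equiv.swap (C.pos i) P.hole ∘ C.pos, (Equiv.injective _).comp C.inj⟩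
  refine ⟨C', (hP.rhMove_iff hk).2 ⟨rfl, i, ?_, rfl⟩, hP.slide rfl rfl⟩
  simpa [hP.pos_mem_horizontal] using hadj

end HasPattern

end Patterns

section LeftmostHorizontal

variable {m n k : ℕ} {C C' : RHConfig m n k} {P : Pattern m n} {r : Fin m} {t : Fin k}

/-- The car `t` is the leftmost horizontal car on row `r`, that is, the target for exit row `r`. -/
structure LeftmostHorizontal (r : Fin m) (t : Fin k) (C : RHConfig m n k) : Prop where
  horizontal : C.ori t = true
  row_eq : (C.pos t).1 = r
  le (j : Fin k) : C.ori j = true → (C.pos j).1 = r → (C.pos t).2 ≤ (C.pos j).2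

theorem HasPattern.exists_leftmostHorizontal (hP : HasPattern C P)
    (hr : ∃ c, (r, c) ∈ P.horizontal) : ∃ t, LeftmostHorizontal r t C := by
  obtain ⟨c, hc⟩ := hr
  obtain ⟨i, hpos, hori⟩ := (hP.mem_horizontal _).1 hc
  obtain ⟨t, ht, hmin⟩ :=
    (Finset.univ.filter fun j => C.ori j = true ∧ (C.pos j).1 = r).exists_min_image
      (fun j => (C.pos j).2) ⟨i, by simp [hpos, hori]⟩
  simp only [Finset.mem_filter, Finset.mem_univ, true_and] at ht hmin
  exact ⟨t, ht.1, ht.2, fun j hj hjr => hmin j ⟨hj, hjr⟩⟩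

theorem row_eq_of_rhMove (hC : RHMove C C') {i : Fin k} (hi : C.ori i = true) :
    (C'.pos i).1 = (C.pos i).1 := by
  obtain ⟨-, c, hstay, -, hadj⟩ := hC
  obtain rfl | hic := eq_or_ne i c
  · simp only [hi, true_and, Bool.true_eq_false, false_and, or_false] at hadj
    exact hadj.1.symm
  · rw [hstay i hic]

theorem column_le_of_rhMove (hC : RHMove C C') {i j : Fin k} (hi : C.ori i = true)
    (hj : C.ori j = true) (hrow : (C.pos i).1 = (C.pos j).1)
    (hle : (C.pos i).2 ≤ (C.pos j).2) : (C'.pos i).2 ≤ (C'.pos j).2 := by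
  obtain rfl | hij := eq_or_ne i j
  · rfl
  have hlt : (C.pos i).2 < (C.pos j).2 :=
    hle.lt_of_ne fun hcol => hij (C.inj (Prod.ext hrow hcol))
  obtain ⟨-, c, hstay, -, hadj⟩ := hC
  have hcol (hc : C.ori c = true) :
      (C'.pos c).2.val ≤ (C.pos c).2 + 1 ∧ (C.pos c).2.val ≤ (C'.pos c).2 + 1 := by
    simp only [hc, true_and, Bool.true_eq_false, false_and, or_false] at hadj
    have := hadj.2
    omega
  obtain rfl | hic := eq_or_ne i c
  · rw [hstay j hij.symm]
    have := hcol hi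
    omega
  obtain rfl | hjc := eq_or_ne j c
  · rw [hstay i hic]
    have := hcol hj
    omega
  · rwa [hstay i hic, hstay j hjc]

namespace LeftmostHorizontal

theorem rhMove (ht : LeftmostHorizontal r t C) (hC : RHMove C C') :
    LeftmostHorizontal r t C' where
  horizontal := by rw [hC.1, ht.horizontal]
  row_eq := by rw [row_eq_of_rhMove hC ht.horizontal, ht.row_eq]
  le j hj hjr := by
    rw [hC.1] at hj
    rw [row_eq_of_rhMove hC hj] at hjr
    exact column_le_of_rhMove hC ht.horizontal hj (ht.row_eq.trans hjr.symm) (ht.le j hj hjr)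

theorem pos_eq_iff [NeZero n] (ht : LeftmostHorizontal r t C) (hP : HasPattern C P) :
    C.pos t = (r, 0) ↔ (r, 0) ∈ P.horizontal := by
  rw [hP.mem_horizontal]
  constructor
  · exact fun hpos => ⟨t, hpos, ht.horizontal⟩
  · rintro ⟨j, hpos, hori⟩
    have hle := ht.le j hori (by rw [hpos])
    rw [hpos] at hle
    exact Prod.ext ht.row_eq (Fin.ext (by simpa [Fin.le_def] using hle))

theorem setOf_solution_eq [NeZero n] (ht : LeftmostHorizontal r t C) (hP : HasPattern C P)
    (hk : k + 1 = m * n) :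
    {N | ∃ f : ℕ → RHConfig m n k, f 0 = C ∧ (∀ i < N, RHMove (f i) (f (i + 1))) ∧
        (f N).pos t = (r, 0)} =
      {N | ReachesIn Pattern.Move (fun Q => (r, 0) ∈ Q.horizontal) N P} := by
  ext N
  refine (reachesIn_iff_exists_path (G := fun C : RHConfig m n k => C.pos t = (r, 0))).symm.trans ?_
  refine reachesIn_iff_of_bisimulation
    (S := fun (C : RHConfig m n k) P => LeftmostHorizontal r t C ∧ HasPattern C P) ?_ ?_ ?_ ⟨ht, hP⟩
  · exact fun h => h.1.pos_eq_iff h.2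
  · intro C P C' h hC
    obtain ⟨Q, hQ, hC'⟩ := h.2.exists_pattern_move hk hC
    exact ⟨Q, hQ, h.1.rhMove hC, hC'⟩
  · intro C P Q h hQ
    obtain ⟨C', hC, hC'⟩ := h.2.exists_rhMove hk hQ
    exact ⟨C', hC, h.1.rhMove hC, hC'⟩

end LeftmostHorizontal

end LeftmostHorizontal

section Bitsets

/-- `f x`, in a form that makes the kernel reduce `x` to a numeral before it is substituted
into `f`; otherwise every occurrence of `x` in `f x` would be an unevaluated copy. -/
def withValue {α : Sort*} (x : ℕ) (f : ℕ → α) : α :=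
  match x with
  | 0 => f 0
  | y + 1 => f (y + 1)

theorem withValue_eq {α : Sort*} (x : ℕ) (f : ℕ → α) : withValue x f = f x := by
  cases x <;> rfl

/-- The union of the bitsets `f a` for `a` in the list `l`. -/
def bitUnion {α : Type*} (l : List α) (f : α → ℕ) : ℕ := (l.map f).foldr (· ||| ·) 0

theorem testBit_bitUnion {α : Type*} (l : List α) (f : α → ℕ) (i : ℕ) :
    (bitUnion l f).testBit i = true ↔ ∃ a ∈ l, (f a).testBit i = true := by
  induction l with
  | nil => simp [bitUnion]
  | cons a l ih => simp [← ih, bitUnion]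

/-- The bitset of the numbers `g < 2 ^ k` such that, for all `i < k`, bit `i` of `g` is allowed
by `c i`. -/
def cylinder (c : ℕ → Bool → Bool) : ℕ → ℕ
  | 0 => 1
  | k + 1 => withValue (cylinder c k) fun X =>
      (if c k false then X else 0) ||| (if c k true then X <<< 2 ^ k else 0)

theorem testBit_cylinder (c : ℕ → Bool → Bool) (k g : ℕ) :
    (cylinder c k).testBit g = true ↔ g < 2 ^ k ∧ ∀ i < k, c i (g.testBit i) = true := by
  induction k generalizing g with
  | zero => simp [cylinder, Nat.testBit_one_eq_true_iff_self_eq_zero]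
  | succ k ih =>
    have hsplit : (cylinder c (k + 1)).testBit g = true ↔
        (c k false = true ∧ (cylinder c k).testBit g = true) ∨
          (c k true = true ∧ 2 ^ k ≤ g ∧ (cylinder c k).testBit (g - 2 ^ k) = true) := by
      rw [cylinder, withValue_eq]
      cases c k false <;> cases c k true <;> simp
    rw [hsplit, ih, ih, Nat.forall_lt_succ_right, pow_succ]
    obtain hg | hg := lt_or_ge g (2 ^ k)
    · rw [Nat.testBit_lt_two_pow hg]
      grind
    · obtain ⟨e, rfl⟩ := Nat.exists_eq_add_of_le hg
      have hlow : (∀ i < k, c i ((2 ^ k + e).testBit i) = true) ↔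
          ∀ i < k, c i (e.testBit i) = true :=
        forall₂_congr fun i hi => by rw [Nat.testBit_two_pow_add_gt hi]
      rw [hlow, Nat.testBit_two_pow_add_eq, Nat.add_sub_cancel_left]
      obtain he | he := lt_or_ge e (2 ^ k)
      · rw [Nat.testBit_lt_two_pow he]
        grind
      · grind

theorem testBit_sum_two_pow (s : Finset ℕ) (i : ℕ) :
    (∑ j ∈ s, 2 ^ j).testBit i = true ↔ i ∈ s := by
  rw [← Nat.mem_bitIndices, ← List.mem_toFinset, Finset.toFinset_bitIndices_sum_two_pow]

end Bitsets

section Encoding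

variable {m n : ℕ}

/-- The cells are numbered row by row. -/
def cellIndex : Cell m n ↪ ℕ := finProdFinEquiv.toEmbedding.trans Fin.valEmbedding

theorem cellIndex_lt (v : Cell m n) : cellIndex v < m * n := (finProdFinEquiv v).isLt

theorem exists_cellIndex_eq {i : ℕ} (hi : i < m * n) : ∃ v : Cell m n, cellIndex v = i :=
  ⟨finProdFinEquiv.symm ⟨i, hi⟩, congrArg Fin.val (finProdFinEquiv.apply_symm_apply ⟨i, hi⟩)⟩

/-- The bitset of the cell numbers of `s`. -/
def cellBits (s : Finset (Cell m n)) : ℕ := ∑ v ∈ s, 2 ^ cellIndex v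

theorem cellBits_eq_sum_map (s : Finset (Cell m n)) :
    cellBits s = ∑ i ∈ s.map cellIndex, 2 ^ i := by
  rw [Finset.sum_map, cellBits]

theorem cellBits_lt (s : Finset (Cell m n)) : cellBits s < 2 ^ (m * n) := by
  rw [cellBits_eq_sum_map]
  refine Nat.geomSum_lt le_rfl fun i hi => ?_
  obtain ⟨v, -, rfl⟩ := Finset.mem_map.1 hi
  exact cellIndex_lt v

theorem testBit_cellBits (s : Finset (Cell m n)) (v : Cell m n) :
    (cellBits s).testBit (cellIndex v) = decide (v ∈ s) := by
  rw [Bool.eq_iff_iff, cellBits_eq_sum_map, testBit_sum_two_pow]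
  simp

theorem cellBits_map_swap {s : Finset (Cell m n)} {u v : Cell m n} (hu : u ∉ s) :
    cellBits (s.map (Equiv.swap v u).toEmbedding) + (decide (v ∈ s)).toNat * 2 ^ cellIndex v =
      cellBits s + (decide (v ∈ s)).toNat * 2 ^ cellIndex u := by
  have hfix {w : Cell m n} (hw : w ∈ s) (hwv : w ≠ v) : Equiv.swap v u w = w :=
    Equiv.swap_apply_of_ne_of_ne hwv (ne_of_mem_of_not_mem hw hu)
  simp only [cellBits, Finset.sum_map, Equiv.coe_toEmbedding]
  by_cases hv : v ∈ s
  · have hrest : ∑ w ∈ s.erase v, 2 ^ cellIndex (Equiv.swap v u w) =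
        ∑ w ∈ s.erase v, 2 ^ cellIndex w :=
      Finset.sum_congr rfl fun w hw => by
        rw [hfix (Finset.mem_of_mem_erase hw) (Finset.ne_of_mem_erase hw)]
    rw [← Finset.sum_erase_add _ _ hv, ← Finset.sum_erase_add _ _ hv, hrest]
    simp [hv, add_right_comm]
  · simp only [hv, decide_false, Bool.toNat_false, zero_mul, add_zero]
    exact Finset.sum_congr rfl fun w hw => by rw [hfix hw (ne_of_mem_of_not_mem hw hv)]

/-- The number encoding a pattern: the number of the hole, followed by one binary digit per cell
that tells whether the cell holds a horizontal car. -/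
def Pattern.code (P : Pattern m n) : ℕ :=
  cellIndex P.hole * 2 ^ (m * n) + cellBits P.horizontal

theorem Pattern.code_div (P : Pattern m n) : P.code / 2 ^ (m * n) = cellIndex P.hole := by
  rw [Pattern.code, add_comm, Nat.add_mul_div_right _ _ (Nat.two_pow_pos _),
    Nat.div_eq_of_lt (cellBits_lt _), zero_add]

/-- The bitset of the codes of the patterns with hole `u` whose set of horizontal cars is, as a
number, in the bitset `W`. -/
def block (u : Cell m n) (W : ℕ) : ℕ := W <<< (cellIndex u * 2 ^ (m * n))

theorem testBit_block {W : ℕ} (hW : ∀ g, W.testBit g = true → g < 2 ^ (m * n)) (u : Cell m n)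
    (P : Pattern m n) :
    (block u W).testBit P.code = true ↔
      P.hole = u ∧ W.testBit (cellBits P.horizontal) = true := by
  rw [block, Nat.testBit_shiftLeft, Bool.and_eq_true, decide_eq_true_iff]
  constructor
  · rintro ⟨hle, hbit⟩
    have hlt := hW _ hbit
    have hhole : P.hole = u := by
      apply cellIndex.injective
      rw [← P.code_div]
      exact Nat.div_eq_of_lt_le hle (by rw [Nat.succ_mul]; omega)
    subst hhole
    rw [Pattern.code, Nat.add_sub_cancel_left] at hbit
    exact ⟨rfl, hbit⟩
  · rintro ⟨rfl, hbit⟩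
    rw [Pattern.code, Nat.add_sub_cancel_left]
    exact ⟨Nat.le_add_right _ _, hbit⟩

/-- The bitset of the numbers of the sets of cells that do not contain `u` and that contain `v` if
and only if `h` is `true`. -/
def setsWith (u v : Cell m n) (h : Bool) : ℕ :=
  cylinder (fun i b => (i = cellIndex u → b = false) ∧ (i = cellIndex v → b = h)) (m * n)

theorem lt_of_testBit_setsWith {u v : Cell m n} {h : Bool} {g : ℕ}
    (hg : (setsWith u v h).testBit g = true) : g < 2 ^ (m * n) :=
  ((testBit_cylinder ..).1 hg).1

theorem testBit_setsWith (u v : Cell m n) (h : Bool) (s : Finset (Cell m n)) :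
    (setsWith u v h).testBit (cellBits s) = true ↔ u ∉ s ∧ decide (v ∈ s) = h := by
  rw [setsWith, testBit_cylinder]
  constructor
  · rintro ⟨-, hbits⟩
    have hu := hbits _ (cellIndex_lt u)
    have hv := hbits _ (cellIndex_lt v)
    simp only [testBit_cellBits, decide_eq_true_iff] at hu hv
    exact ⟨by simpa using hu.1 trivial, hv.2 trivial⟩
  · rintro ⟨hu, rfl⟩
    refine ⟨cellBits_lt s, fun i hi => ?_⟩
    obtain ⟨w, rfl⟩ := exists_cellIndex_eq hi
    simp only [testBit_cellBits, cellIndex.injective.eq_iff, decide_eq_true_iff]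
    exact ⟨by rintro rfl; simpa using hu, by rintro rfl; rfl⟩

end Encoding

section Search

variable {m n : ℕ}

/-- All cells of the grid. -/
def cells (m n : ℕ) : List (Cell m n) := List.finRange m ×ˢ List.finRange n

theorem mem_cells (v : Cell m n) : v ∈ cells m n :=
  List.pair_mem_product.2 ⟨List.mem_finRange _, List.mem_finRange _⟩

/-- The cells next to `u`, with the orientation that a car there needs in order to slide to `u`. -/
def slidesInto (u : Cell m n) : List (Cell m n × Bool) :=
  (cells m n ×ˢ [true, false]).filter fun s => SlideAdj s.2 s.1 u

theorem mem_slidesInto {u v : Cell m n} {h : Bool} :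
    (v, h) ∈ slidesInto u ↔ SlideAdj h v u := by
  simp [slidesInto, List.mem_product, mem_cells]

/-- The bitset of the codes of the patterns with a horizontal car at `w`. -/
def goalPatterns (w : Cell m n) : ℕ :=
  bitUnion (cells m n) fun u => block u (setsWith u w true)

theorem testBit_goalPatterns (w : Cell m n) (P : Pattern m n) :
    (goalPatterns w).testBit P.code = true ↔ w ∈ P.horizontal := by
  simp only [goalPatterns, testBit_bitUnion, mem_cells, true_and,
    testBit_block fun _ => lt_of_testBit_setsWith, exists_eq_left', testBit_setsWith]
  simp [P.hole_notMem]

/-- The bitset of the numbers of the sets of horizontal cars such that, with hole `u`, sliding a car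
of orientation `s.2` at `s.1` leads to a pattern whose code is in `X`. -/
def slidePreimage (X : ℕ) (u : Cell m n) (s : Cell m n × Bool) : ℕ :=
  ((X >>> (cellIndex s.1 * 2 ^ (m * n)) &&& setsWith s.1 u s.2)
    <<< (s.2.toNat * 2 ^ cellIndex s.1) >>> (s.2.toNat * 2 ^ cellIndex u)) &&& setsWith u s.1 s.2

theorem lt_of_testBit_slidePreimage {X : ℕ} {u : Cell m n} {s : Cell m n × Bool} {g : ℕ}
    (hg : (slidePreimage X u s).testBit g = true) : g < 2 ^ (m * n) := by
  rw [slidePreimage, Nat.testBit_and, Bool.and_eq_true] at hg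
  exact lt_of_testBit_setsWith hg.2

theorem testBit_slidePreimage (X : ℕ) (P : Pattern m n) (v : Cell m n) (h : Bool) :
    (slidePreimage X P.hole (v, h)).testBit (cellBits P.horizontal) = true ↔
      decide (v ∈ P.horizontal) = h ∧ X.testBit (P.slide v).code = true := by
  simp only [slidePreimage, Nat.testBit_and, Bool.and_eq_true, testBit_setsWith, P.hole_notMem,
    not_false_eq_true, true_and]
  rw [and_comm]
  refine and_congr_right ?_
  rintro rfl
  have hslide : (setsWith v P.hole (v ∈ P.horizontal)).testBit
      (cellBits (P.slide v).horizontal) = true :=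
    (testBit_setsWith ..).2
      ⟨(P.slide v).hole_notMem, by simp [Pattern.slide, Finset.mem_map_equiv]⟩
  have hbits : cellBits (P.slide v).horizontal + _ = _ := cellBits_map_swap P.hole_notMem
  rw [Nat.testBit_shiftRight, Nat.testBit_shiftLeft, add_comm (_ * _), ← hbits,
    Nat.add_sub_cancel, Nat.testBit_and, hslide, Nat.testBit_shiftRight]
  simp [Pattern.code, Pattern.slide]

/-- One round of backward search: the bitset `X` together with the codes of the patterns that a
move takes into it. -/
def searchStep (m n X : ℕ) : ℕ :=
  withValue X fun X => X ||| bitUnion (cells m n) fun u =>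
    block u (bitUnion (slidesInto u) (slidePreimage X u))

theorem testBit_searchStep (X : ℕ) (P : Pattern m n) :
    (searchStep m n X).testBit P.code = true ↔
      X.testBit P.code = true ∨ ∃ Q, P.Move Q ∧ X.testBit Q.code = true := by
  have hlt (u : Cell m n) (g : ℕ)
      (hg : (bitUnion (slidesInto u) (slidePreimage X u)).testBit g = true) : g < 2 ^ (m * n) := by
    obtain ⟨s, -, hs⟩ := (testBit_bitUnion ..).1 hg
    exact lt_of_testBit_slidePreimage hs
  rw [searchStep, withValue_eq, Nat.testBit_or, Bool.or_eq_true]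
  simp only [testBit_bitUnion, testBit_block (hlt _), mem_cells, true_and, exists_eq_left']
  refine or_congr_right ⟨?_, ?_⟩
  · rintro ⟨⟨v, h⟩, hs, hX⟩
    obtain ⟨rfl, hslide⟩ := (testBit_slidePreimage X P v h).1 hX
    exact ⟨_, ⟨v, mem_slidesInto.1 hs, rfl⟩, hslide⟩
  · rintro ⟨_, ⟨v, hadj, rfl⟩, hX⟩
    exact ⟨_, mem_slidesInto.2 hadj, (testBit_slidePreimage ..).2 ⟨rfl, hX⟩⟩

theorem testBit_iterate_searchStep (w : Cell m n) (b : ℕ) (P : Pattern m n) :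
    ((searchStep m n)^[b] (goalPatterns w)).testBit P.code = true ↔
      ∃ N ≤ b, ReachesIn Pattern.Move (fun Q => w ∈ Q.horizontal) N P := by
  induction b generalizing P with
  | zero => simp [testBit_goalPatterns, ReachesIn]
  | succ b ih =>
    rw [Function.iterate_succ_apply', testBit_searchStep, exists_reachesIn_le_succ_iff, ih]
    simp only [ih]

theorem exists_reachesIn_le_of_isFixedPt {w : Cell m n} {b N : ℕ} {P : Pattern m n}
    (hb : Function.IsFixedPt (searchStep m n) ((searchStep m n)^[b] (goalPatterns w)))
    (hN : ReachesIn Pattern.Move (fun Q => w ∈ Q.horizontal) N P) :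
    ∃ N' ≤ b, ReachesIn Pattern.Move (fun Q => w ∈ Q.horizontal) N' P := by
  rw [← testBit_iterate_searchStep, ← (hb.iterate N).eq, ← Function.iterate_add_apply,
    testBit_iterate_searchStep]
  exact ⟨N, Nat.le_add_right N b, hN⟩

end Search

section FourByFour

theorem isFixedPt_searchStep_forty (r : Fin 4) :
    Function.IsFixedPt (searchStep 4 4)
      ((searchStep 4 4)^[40] (goalPatterns ((r, 0) : Cell 4 4))) := by
  revert r
  unfold Function.IsFixedPt
  decide +kernel

/-- A hardest pattern, with exit row 1. In full:
```
H H H V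
V H V V
H V . V
V V H H
``` -/
def hardestPattern : Pattern 4 4 where
  hole := (2, 2)
  horizontal := {(0, 0), (0, 1), (0, 2), (1, 1), (2, 0), (3, 2), (3, 3)}
  hole_notMem := by decide

theorem exists_reachesIn_hardestPattern_le_forty :
    ∃ N ≤ 40, ReachesIn Pattern.Move (fun Q => (1, 0) ∈ Q.horizontal) N hardestPattern :=
  (testBit_iterate_searchStep _ _ _).1 (by decide +kernel)

theorem not_exists_reachesIn_hardestPattern_le_thirtyNine :
    ¬∃ N ≤ 39, ReachesIn Pattern.Move (fun Q => (1, 0) ∈ Q.horizontal) N hardestPattern :=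
  mt (testBit_iterate_searchStep _ _ _).2 (by decide +kernel)

theorem isLeast_hardestPattern :
    IsLeast {N | ReachesIn Pattern.Move (fun Q => (1, 0) ∈ Q.horizontal) N hardestPattern} 40 := by
  have hlower {N : ℕ}
      (hN : ReachesIn Pattern.Move (fun Q => (1, 0) ∈ Q.horizontal) N hardestPattern) :
      40 ≤ N := by
    by_contra! hlt
    exact not_exists_reachesIn_hardestPattern_le_thirtyNine ⟨N, Nat.le_of_lt_succ hlt, hN⟩
  obtain ⟨N, hN, hsolved⟩ := exists_reachesIn_hardestPattern_le_forty
  obtain rfl : N = 40 := hN.antisymm (hlower hsolved)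
  exact ⟨hsolved, fun _ => hlower⟩

end FourByFour

end RushHour

/-- over all 4×4 Unit Rush Hour configurations with exactly one
empty cell (hence exactly 15 cars), any exit row `r` containing at least one
horizontal car, with target `t` the leftmost horizontal car on row `r`, that
are solvable, the maximum of the minimal number of legal moves needed to bring
the target car to cell `(r,0)` is exactly 40. -/
theorem stmt_10 :
    IsGreatest {d : ℕ | ∃ (C : RHConfig 4 4 15) (r : Fin 4) (t : Fin 15),
      C.ori t = true ∧ (C.pos t).1 = r ∧
      (∀ j, C.ori j = true → (C.pos j).1 = r → (C.pos t).2 ≤ (C.pos j).2) ∧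
      IsLeast {N : ℕ | ∃ f : ℕ → RHConfig 4 4 15, f 0 = C ∧
        (∀ i < N, RHMove (f i) (f (i + 1))) ∧
        (f N).pos t = (r, (0 : Fin 4))} d} 40 := by
  constructor
  · obtain ⟨C, hC⟩ := RushHour.hardestPattern.exists_config (k := 15) rfl
    obtain ⟨t, ht⟩ := hC.exists_leftmostHorizontal (r := 1) ⟨1, by decide⟩
    refine ⟨C, 1, t, ht.horizontal, ht.row_eq, ht.le, ?_⟩
    rw [ht.setOf_solution_eq hC rfl]
    exact RushHour.isLeast_hardestPattern
  · rintro d ⟨C, r, t, hori, hrow, hleft, hd⟩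
    obtain ⟨P, hP⟩ := RushHour.exists_hasPattern (by norm_num) C
    rw [RushHour.LeftmostHorizontal.setOf_solution_eq ⟨hori, hrow, hleft⟩ hP rfl] at hd
    obtain ⟨N, hN, hsolved⟩ :=
      RushHour.exists_reachesIn_le_of_isFixedPt (RushHour.isFixedPt_searchStep_forty r) hd.1
    exact (hd.2 hsolved).trans hN
end
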